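/- Let T be a positive bounded linear operator on ℓ^p (1 ≤ p < ∞). Then T has no non-trivial closed invariant ideal if and only if for every pair i ≠ j in ℕ there exists n ≥ 1 such that (T^n e_i) j > 0. -/

import Mathlib

open scoped ENNReal

noncomputable section

/-- The `n`-th canonical unit vector of real `ℓᵖ`. -/
def e (p : ℝ≥0∞) (n : ℕ) : lp (fun _ : ℕ => ℝ) p := lp.single p n 1

/-- `T` is a lattice homomorphism: it sends coordinatewise suprema to
coordinatewise suprema. -/
def IsLatticeHom (p : ℝ≥0∞) [Fact (1 ≤ p)]
    (T : lp (fun _ : ℕ => ℝ) p →L[ℝ] lp (fun _ : ℕ => ℝ) p) : Prop :=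
  ∀ x y z : lp (fun _ : ℕ => ℝ) p,
    (∀ n, z n = max (x n) (y n)) → ∀ n, (T z) n = max ((T x) n) ((T y) n)

/-- `T` is a positive operator for the coordinatewise order. -/
def IsPositiveOp (p : ℝ≥0∞) [Fact (1 ≤ p)]
    (T : lp (fun _ : ℕ => ℝ) p →L[ℝ] lp (fun _ : ℕ => ℝ) p) : Prop :=
  ∀ x : lp (fun _ : ℕ => ℝ) p, (∀ n, 0 ≤ x n) → ∀ n, 0 ≤ (T x) n

/-- `T` has a non-trivial closed invariant ideal. -/
def HasNontrivialClosedInvariantIdeal (p : ℝ≥0∞) [Fact (1 ≤ p)]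
    (T : lp (fun _ : ℕ => ℝ) p →L[ℝ] lp (fun _ : ℕ => ℝ) p) : Prop :=
  ∃ I : Submodule ℝ (lp (fun _ : ℕ => ℝ) p),
    IsClosed (I : Set (lp (fun _ : ℕ => ℝ) p)) ∧ I ≠ ⊥ ∧ I ≠ ⊤ ∧
    (∀ x y : lp (fun _ : ℕ => ℝ) p, (∀ n, |x n| ≤ |y n|) → y ∈ I → x ∈ I) ∧
    (∀ x ∈ I, T x ∈ I)

/-- The matrix of `T` is tridiagonal. -/
def IsTridiagonal (p : ℝ≥0∞) [Fact (1 ≤ p)]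
    (T : lp (fun _ : ℕ => ℝ) p →L[ℝ] lp (fun _ : ℕ => ℝ) p) : Prop :=
  ∀ n m : ℕ, (m + 1 < n ∨ n + 1 < m) → (T (e p m)) n = 0

/-!
For `p < ∞` a closed ideal of `ℓᵖ` is determined by the set `S` of unit vectors it contains: it
consists of the sequences vanishing off `S`. Draw an edge `i → j` whenever `(T eᵢ)ⱼ ≠ 0`. The ideal
attached to `S` is `T`-invariant exactly when no edge leaves `S`, so `T` has only trivial closed
invariant ideals if and only if this graph is strongly connected. If `T` is positive, no
cancellation can occur in `Tⁿ`, and there is a path from `i` to `j` if and only if `(Tⁿ eᵢ)ⱼ > 0`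
for some `n`.
-/

open Set Relation
open scoped lp

theorem forall_closed_eq_empty_or_univ_iff_reflTransGen {α : Type*} {r : α → α → Prop} :
    (∀ S : Set α, (∀ i ∈ S, ∀ j, r i j → j ∈ S) → S = ∅ ∨ S = univ) ↔
      ∀ i j, ReflTransGen r i j := by
  constructor
  · intro h i j
    have reachable_eq : {k | ReflTransGen r i k} = univ :=
      (h {k | ReflTransGen r i k} fun _ hk _ hkl => hk.tail hkl).resolve_left
        (Set.nonempty_of_mem (ReflTransGen.refl : ReflTransGen r i i)).ne_empty
    exact reachable_eq.ge (mem_univ j)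
  · intro h S hS
    refine S.eq_empty_or_nonempty.imp_right fun ⟨i, hi⟩ => eq_univ_of_forall fun j => ?_
    induction h i j with
    | refl => exact hi
    | tail _ hkl hk => exact hS _ hk _ hkl

variable {ι 𝕜 : Type*} {p : ℝ≥0∞} [NormedField 𝕜]

/-- The canonical unit vectors of `ℓᵖ(ι, 𝕜)`. -/
abbrev unitVec (𝕜 : Type*) [NormedField 𝕜] (p : ℝ≥0∞) [DecidableEq ι] (i : ι) : ℓ^p(ι, 𝕜) :=
  lp.single p i 1

theorem unitVec_apply_nonneg [PartialOrder 𝕜] [IsOrderedRing 𝕜] [DecidableEq ι] (i j : ι) :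
    0 ≤ unitVec 𝕜 p i j :=
  (Pi.single_nonneg.2 zero_le_one : (0 : ι → 𝕜) ≤ Pi.single i 1) j

section Ideals

/-- Order ideals of `ℓᵖ(ι, 𝕜)`. Moduli are compared through the norm of `𝕜`, which is the absolute
value when `𝕜 = ℝ`; closedness is not included. -/
def IsOrderIdeal (I : Submodule 𝕜 ℓ^p(ι, 𝕜)) : Prop :=
  ∀ x y : ℓ^p(ι, 𝕜), (∀ i, ‖x i‖ ≤ ‖y i‖) → y ∈ I → x ∈ I

variable (𝕜 p) in
/-- The ideal of all elements of `ℓᵖ(ι, 𝕜)` supported in `S`, the analogue of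
`Finsupp.supported`. -/
def lpSupported (S : Set ι) : Submodule 𝕜 ℓ^p(ι, 𝕜) where
  carrier := {x | ∀ i ∉ S, x i = 0}
  add_mem' hx hy i hi := by simp [hx i hi, hy i hi]
  zero_mem' _ _ := rfl
  smul_mem' c x hx i hi := by simp [hx i hi]

theorem lpSupported_empty : lpSupported 𝕜 p (∅ : Set ι) = ⊥ :=
  (Submodule.eq_bot_iff _).2 fun _ hx => lp.ext (funext fun i => hx i (notMem_empty i))

theorem lpSupported_univ : lpSupported 𝕜 p (univ : Set ι) = ⊤ :=
  Submodule.eq_top_iff'.2 fun _ i hi => absurd (mem_univ i) hi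

theorem isOrderIdeal_lpSupported (S : Set ι) : IsOrderIdeal (lpSupported 𝕜 p S) :=
  fun x y hxy hy i hi => norm_le_zero_iff.1 ((hxy i).trans_eq (by rw [hy i hi, norm_zero]))

theorem isClosed_lpSupported [Fact (1 ≤ p)] (S : Set ι) :
    IsClosed (lpSupported 𝕜 p S : Set ℓ^p(ι, 𝕜)) := by
  have : (lpSupported 𝕜 p S : Set ℓ^p(ι, 𝕜)) = ⋂ i ∉ S, {x | x i = 0} := by
    ext x
    simp only [mem_iInter]
    rfl
  rw [this]
  exact isClosed_biInter fun i _ =>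
    isClosed_eq (lp.lipschitzWith_one_eval p i).continuous continuous_const

theorem unitVec_mem_lpSupported [DecidableEq ι] {S : Set ι} {i : ι} :
    unitVec 𝕜 p i ∈ lpSupported 𝕜 p S ↔ i ∈ S := by
  constructor
  · intro h
    by_contra hi
    exact one_ne_zero (α := 𝕜) (by simpa using h i hi)
  · intro hi j hj
    exact lp.single_apply_ne p i 1 (ne_of_mem_of_not_mem hi hj).symm

theorem lpSupported_injective : Function.Injective (lpSupported 𝕜 p : Set ι → _) :=
  fun S S' h => by
    classical
    ext i
    rw [← unitVec_mem_lpSupported (𝕜 := 𝕜) (p := p), h, unitVec_mem_lpSupported]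

variable [DecidableEq ι]

theorem IsOrderIdeal.unitVec_mem {I : Submodule 𝕜 ℓ^p(ι, 𝕜)} (hI : IsOrderIdeal I)
    {x : ℓ^p(ι, 𝕜)} (hx : x ∈ I) {i : ι} (hi : x i ≠ 0) : unitVec 𝕜 p i ∈ I := by
  refine hI _ ((x i)⁻¹ • x) (fun j => ?_) (I.smul_mem _ hx)
  obtain rfl | hj := eq_or_ne j i
  · simp [hi]
  · simp only [lp.single_apply_ne p i _ hj, norm_zero, norm_nonneg]

variable [Fact (1 ≤ p)]

theorem hasSum_smul_unitVec (hp : p ≠ ∞) (x : ℓ^p(ι, 𝕜)) :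
    HasSum (fun i => x i • unitVec 𝕜 p i) x := by
  simpa only [← lp.single_smul, smul_eq_mul, mul_one] using lp.hasSum_single hp x

theorem lpSupported_le_of_unitVec_mem (hp : p ≠ ∞) {I : Submodule 𝕜 ℓ^p(ι, 𝕜)}
    (hI : IsClosed (I : Set ℓ^p(ι, 𝕜))) {S : Set ι} (hS : ∀ i ∈ S, unitVec 𝕜 p i ∈ I) :
    lpSupported 𝕜 p S ≤ I := by
  intro x hx
  refine hI.mem_of_tendsto (hasSum_smul_unitVec hp x) (.of_forall fun s => I.sum_mem fun i _ => ?_)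
  by_cases hi : i ∈ S
  · exact I.smul_mem _ (hS i hi)
  · simp only [hx i hi, zero_smul, I.zero_mem]

theorem IsOrderIdeal.lpSupported_eq (hp : p ≠ ∞) {I : Submodule 𝕜 ℓ^p(ι, 𝕜)}
    (hI : IsOrderIdeal I) (hclosed : IsClosed (I : Set ℓ^p(ι, 𝕜))) :
    lpSupported 𝕜 p {i | unitVec 𝕜 p i ∈ I} = I := by
  refine (lpSupported_le_of_unitVec_mem hp hclosed fun _ hi => hi).antisymm fun x hx i hi => ?_
  by_contra hxi
  exact hi (hI.unitVec_mem hx hxi)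

end Ideals

section Irreducibility

variable [Fact (1 ≤ p)] [DecidableEq ι]

/-- `T` is ideal irreducible: its only closed invariant ideals are the trivial ones. -/
def IsIdealIrreducible (T : ℓ^p(ι, 𝕜) →L[𝕜] ℓ^p(ι, 𝕜)) : Prop :=
  ∀ I : Submodule 𝕜 ℓ^p(ι, 𝕜), IsClosed (I : Set ℓ^p(ι, 𝕜)) → IsOrderIdeal I →
    MapsTo T I I → I = ⊥ ∨ I = ⊤

/-- The edge relation of the directed graph of `T`: there is an edge from `i` to `j` when the
`(j, i)` entry of the matrix of `T` is nonzero. -/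
def HasEdge (T : ℓ^p(ι, 𝕜) →L[𝕜] ℓ^p(ι, 𝕜)) (i j : ι) : Prop :=
  T (unitVec 𝕜 p i) j ≠ 0

theorem mapsTo_lpSupported_iff (hp : p ≠ ∞) {T : ℓ^p(ι, 𝕜) →L[𝕜] ℓ^p(ι, 𝕜)} {S : Set ι} :
    MapsTo T (lpSupported 𝕜 p S) (lpSupported 𝕜 p S) ↔ ∀ i ∈ S, ∀ j, HasEdge T i j → j ∈ S := by
  constructor
  · intro h i hi j hij
    by_contra hj
    exact hij (h (unitVec_mem_lpSupported.2 hi) j hj)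
  · intro h
    have isClosed_comap :
        IsClosed ((lpSupported 𝕜 p S).comap T.toLinearMap : Set ℓ^p(ι, 𝕜)) :=
      (isClosed_lpSupported S).preimage T.continuous
    refine lpSupported_le_of_unitVec_mem hp isClosed_comap fun i hi j hj => ?_
    by_contra hij
    exact hj (h i hi j hij)

theorem isIdealIrreducible_iff_forall_set (hp : p ≠ ∞) {T : ℓ^p(ι, 𝕜) →L[𝕜] ℓ^p(ι, 𝕜)} :
    IsIdealIrreducible T ↔
      ∀ S : Set ι, (∀ i ∈ S, ∀ j, HasEdge T i j → j ∈ S) → S = ∅ ∨ S = univ := by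
  constructor
  · intro h S hS
    have := h _ (isClosed_lpSupported S) (isOrderIdeal_lpSupported S)
      ((mapsTo_lpSupported_iff hp).2 hS)
    rwa [← lpSupported_empty, ← lpSupported_univ, lpSupported_injective.eq_iff,
      lpSupported_injective.eq_iff] at this
  · intro h I hclosed hI hinv
    rw [← hI.lpSupported_eq hp hclosed] at hinv ⊢
    rw [← lpSupported_empty, ← lpSupported_univ]
    exact (h _ ((mapsTo_lpSupported_iff hp).1 hinv)).imp (congrArg _) (congrArg _)

theorem isIdealIrreducible_iff_reflTransGen (hp : p ≠ ∞) {T : ℓ^p(ι, 𝕜) →L[𝕜] ℓ^p(ι, 𝕜)} :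
    IsIdealIrreducible T ↔ ∀ i j, ReflTransGen (HasEdge T) i j :=
  (isIdealIrreducible_iff_forall_set hp).trans forall_closed_eq_empty_or_univ_iff_reflTransGen

theorem reflTransGen_hasEdge_of_pow_ne_zero (hp : p ≠ ∞) {T : ℓ^p(ι, 𝕜) →L[𝕜] ℓ^p(ι, 𝕜)}
    {n : ℕ} {i j : ι} (h : (T ^ n) (unitVec 𝕜 p i) j ≠ 0) : ReflTransGen (HasEdge T) i j := by
  have mapsTo_reachable : MapsTo T (lpSupported 𝕜 p {k | ReflTransGen (HasEdge T) i k})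
      (lpSupported 𝕜 p {k | ReflTransGen (HasEdge T) i k}) :=
    (mapsTo_lpSupported_iff hp).2 fun _ hk _ hkl => hk.tail hkl
  have pow_mem := mapsTo_reachable.iterate n (unitVec_mem_lpSupported.2 ReflTransGen.refl)
  rw [← FunLike.coe_pow_eq_iterate] at pow_mem
  by_contra hj
  exact h (pow_mem j hj)

end Irreducibility

section Positive

variable [Fact (1 ≤ p)] [PartialOrder 𝕜]

/-- Positivity of an operator on `ℓᵖ(ι, 𝕜)` for the coordinatewise order. -/
def IsCoordPositive (T : ℓ^p(ι, 𝕜) →L[𝕜] ℓ^p(ι, 𝕜)) : Prop :=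
  ∀ x : ℓ^p(ι, 𝕜), (∀ i, 0 ≤ x i) → ∀ i, 0 ≤ T x i

namespace IsCoordPositive

variable {T : ℓ^p(ι, 𝕜) →L[𝕜] ℓ^p(ι, 𝕜)}

theorem pow (hT : IsCoordPositive T) (n : ℕ) : IsCoordPositive (T ^ n) := by
  induction n with
  | zero => exact fun _ hx => hx
  | succ n ih =>
    rw [pow_succ']
    exact fun x hx => hT _ (ih x hx)

variable [DecidableEq ι]

theorem apply_mul_le [IsOrderedAddMonoid 𝕜] (hT : IsCoordPositive T) {x : ℓ^p(ι, 𝕜)}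
    (hx : ∀ i, 0 ≤ x i) (i j : ι) : x i * T (unitVec 𝕜 p i) j ≤ T x j := by
  have sub_nonneg_apply : ∀ k, 0 ≤ (x - x i • unitVec 𝕜 p i) k := by
    refine fun k => sub_nonneg.2 (?_ : x i * unitVec 𝕜 p i k ≤ x k)
    obtain rfl | hk := eq_or_ne k i
    · simp
    · simpa [hk] using hx k
  have image_nonneg := hT _ sub_nonneg_apply j
  rw [map_sub, map_smul] at image_nonneg
  exact sub_nonneg.1 image_nonneg

variable [IsStrictOrderedRing 𝕜]

theorem exists_pow_pos_of_reflTransGen (hT : IsCoordPositive T) {i j : ι}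
    (h : ReflTransGen (HasEdge T) i j) : ∃ n, 0 < (T ^ n) (unitVec 𝕜 p i) j := by
  induction h with
  | refl => exact ⟨0, by simp⟩
  | @tail k l _ hkl ih =>
    obtain ⟨n, hn⟩ := ih
    have entry_pos : 0 < T (unitVec 𝕜 p k) l :=
      (hT _ (unitVec_apply_nonneg k) l).lt_of_ne' hkl
    refine ⟨n + 1, ?_⟩
    rw [pow_succ']
    exact (mul_pos hn entry_pos).trans_le
      (hT.apply_mul_le (hT.pow n _ (unitVec_apply_nonneg i)) k l)

theorem reflTransGen_iff_exists_pow_pos (hT : IsCoordPositive T) (hp : p ≠ ∞) {i j : ι} :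
    ReflTransGen (HasEdge T) i j ↔ ∃ n, 0 < (T ^ n) (unitVec 𝕜 p i) j :=
  ⟨hT.exists_pow_pos_of_reflTransGen,
    fun ⟨_, hn⟩ => reflTransGen_hasEdge_of_pow_ne_zero hp hn.ne'⟩

end IsCoordPositive

end Positive

theorem stmt_17_general [DecidableEq ι] [PartialOrder 𝕜] [IsStrictOrderedRing 𝕜]
    [Fact (1 ≤ p)] (hp : p ≠ ∞) {T : ℓ^p(ι, 𝕜) →L[𝕜] ℓ^p(ι, 𝕜)} (hT : IsCoordPositive T) :
    IsIdealIrreducible T ↔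
      ∀ i j, i ≠ j → ∃ n : ℕ, 1 ≤ n ∧ 0 < (T ^ n) (unitVec 𝕜 p i) j := by
  rw [isIdealIrreducible_iff_reflTransGen hp]
  refine forall₂_congr fun i j => ?_
  obtain rfl | hij := eq_or_ne i j
  · exact iff_of_true .refl fun h => absurd rfl h
  have pow_zero_apply : (T ^ 0) (unitVec 𝕜 p i) j = 0 := lp.single_apply_ne p i 1 hij.symm
  rw [hT.reflTransGen_iff_exists_pow_pos hp, forall_prop_of_true hij]
  refine exists_congr fun n => ⟨fun hn => ⟨?_, hn⟩, And.right⟩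
  exact Nat.one_le_iff_ne_zero.2 fun h => hn.ne' (h ▸ pow_zero_apply)

theorem isIdealIrreducible_iff_not_hasNontrivialClosedInvariantIdeal [Fact (1 ≤ p)]
    {T : ℓ^p(ℕ, ℝ) →L[ℝ] ℓ^p(ℕ, ℝ)} :
    IsIdealIrreducible T ↔ ¬ HasNontrivialClosedInvariantIdeal p T := by
  constructor
  · rintro h ⟨I, hclosed, hbot, htop, hI, hinv⟩
    exact (h I hclosed hI hinv).elim hbot htop
  · intro h I hclosed hI hinv
    by_contra! hne
    exact h ⟨I, hclosed, hne.1, hne.2, hI, hinv⟩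

/-- A positive operator on `ℓᵖ` (`1 ≤ p < ∞`) has no non-trivial closed
invariant ideal if and only if for every pair `i ≠ j` there exists `n ≥ 1` with
`(Tⁿ eᵢ)ⱼ > 0`. -/
theorem stmt_17 (p : ℝ≥0∞) [Fact (1 ≤ p)] (hp : p ≠ ∞)
    (T : lp (fun _ : ℕ => ℝ) p →L[ℝ] lp (fun _ : ℕ => ℝ) p)
    (hTpos : IsPositiveOp p T) :
    ¬ HasNontrivialClosedInvariantIdeal p T ↔
      ∀ i j : ℕ, i ≠ j → ∃ n : ℕ, 1 ≤ n ∧ 0 < ((T ^ n) (e p i)) j :=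
  isIdealIrreducible_iff_not_hasNontrivialClosedInvariantIdeal.symm.trans
    (stmt_17_general hp hTpos)
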